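/- For all sufficiently large n the following holds (this is the largeness of Nisan's natural property with density 1/2): if f is drawn uniformly at random from the set of all functions {0,1}^{⌈n/2⌉} × {0,1}^{⌊n/2⌋} → {-1,1}, then Pr_f[2^n · R₂(f) ≤ 2^{2n/3}] ≥ 1/2. -/

import Mathlib

/-!
First moment argument.  Let `N = |X|` and `M = |Y|`.  In the sum defining `R2`, the term at
`(x, x', y, y')` has mean zero over a random sign function unless `x = x'` or `y = y'`
(flip the sign at the single point `(x, y)`: `sum_term_eq_zero`), and it is always at most `1`.
Hence the sum has mean at most `N ^ 2 * M + N * M ^ 2` (`sum_R2_le`), that is,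
`𝔼 [N * M * R2] ≤ N + M`.  Here `N * M = 2 ^ n` and `N + M ≤ 2 * 2 ^ ((n + 1) / 2)`, which is at
most half of `2 ^ (2 * n / 3)` once `n ≥ 15`.  As `R2` is nonnegative (`R2_nonneg`), Markov's
inequality bounds the probability of exceeding `2 ^ (2 * n / 3)` by `1 / 2`.
-/

open Finset
open scoped Classical

/-- The 2-party norm of `f : X × Y → ℝ`. -/
noncomputable def R2 {X Y : Type*} [Fintype X] [Fintype Y] (f : X × Y → ℝ) : ℝ :=
  (∑ x : X, ∑ x' : X, ∑ y : Y, ∑ y' : Y,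
      f (x, y) * f (x, y') * f (x', y) * f (x', y')) /
    ((Fintype.card X : ℝ) ^ 2 * (Fintype.card Y : ℝ) ^ 2)

/-- The `±1` value associated with a boolean. -/
def sgn (b : Bool) : ℝ := if b then 1 else -1

lemma sgn_not (b : Bool) : sgn (!b) = - sgn b := by
  cases b <;> simp [sgn]

lemma abs_sgn (b : Bool) : |sgn b| = 1 := by
  cases b <;> simp [sgn]

/-- The sum defining `R2` is `∑ x x', (∑ y, f (x, y) * f (x', y)) ^ 2`. -/
lemma R2_nonneg {X Y : Type*} [Fintype X] [Fintype Y] (f : X × Y → ℝ) : 0 ≤ R2 f := by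
  unfold R2
  apply div_nonneg _ (by positivity)
  refine sum_nonneg fun x _ => sum_nonneg fun x' _ => ?_
  have h : ∑ y : Y, ∑ y' : Y, f (x, y) * f (x, y') * f (x', y) * f (x', y')
      = (∑ y : Y, f (x, y) * f (x', y)) ^ 2 := by
    rw [sq, sum_mul_sum]
    exact sum_congr rfl fun y _ => sum_congr rfl fun y' _ => by ring
  rw [h]
  positivity

/-- When the four corners `(x, y), (x, y'), (x', y), (x', y')` are distinct, flipping the sign
at `(x, y)` is an involution that negates the summand. -/
lemma sum_term_eq_zero {X Y : Type*} [Fintype X] [Fintype Y] [DecidableEq X] [DecidableEq Y]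
    {x x' : X} {y y' : Y}
    (hx : x ≠ x') (hy : y ≠ y') :
    ∑ g : X × Y → Bool,
      sgn (g (x, y)) * sgn (g (x, y')) * sgn (g (x', y)) * sgn (g (x', y')) = 0 := by
  refine sum_involution (fun g _ => Function.update g (x, y) (!g (x, y))) ?_ ?_ ?_ ?_
  · intro g _
    have h1 : (x, y') ≠ (x, y) := by simp [hy.symm]
    have h2 : (x', y) ≠ (x, y) := by simp [hx.symm]
    have h3 : (x', y') ≠ (x, y) := by simp [hx.symm]
    rw [Function.update_self, Function.update_of_ne h1, Function.update_of_ne h2,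
      Function.update_of_ne h3, sgn_not]
    ring
  · intro g _ _ h
    have := congrFun h (x, y)
    simp at this
  · intro g _
    exact mem_univ _
  · intro g _
    simp

lemma sum_term_le {X Y : Type*} [Fintype X] [Fintype Y] [DecidableEq X] [DecidableEq Y]
    (x x' : X) (y y' : Y) :
    ∑ g : X × Y → Bool,
      sgn (g (x, y)) * sgn (g (x, y')) * sgn (g (x', y)) * sgn (g (x', y'))
      ≤ (Fintype.card (X × Y → Bool) : ℝ) *
        ((if x = x' then 1 else 0) + (if y = y' then 1 else 0)) := by
  by_cases h : x ≠ x' ∧ y ≠ y'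
  · rw [sum_term_eq_zero h.1 h.2]
    simp [h.1, h.2]
  · have h1 : (1 : ℝ) ≤ (if x = x' then 1 else 0) + (if y = y' then 1 else 0) := by
      by_cases hx : x = x' <;> by_cases hy : y = y' <;> simp_all
    calc _ ≤ ∑ _g : X × Y → Bool, (1 : ℝ) := by
          refine sum_le_sum fun g _ => (le_abs_self _).trans ?_
          simp [abs_mul, abs_sgn]
      _ = (Fintype.card (X × Y → Bool) : ℝ) * 1 := by simp
      _ ≤ _ := by gcongr

lemma sum_R2_le {X Y : Type*} [Fintype X] [Fintype Y] [DecidableEq X] [DecidableEq Y]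
    [Nonempty X] [Nonempty Y] :
    ∑ g : X × Y → Bool,
      ((Fintype.card X : ℝ) * Fintype.card Y) * R2 (fun p => sgn (g p))
      ≤ (Fintype.card (X × Y → Bool) : ℝ) * (Fintype.card X + Fintype.card Y) := by
  have hN : (0 : ℝ) < Fintype.card X := by exact_mod_cast Fintype.card_pos
  have hM : (0 : ℝ) < Fintype.card Y := by exact_mod_cast Fintype.card_pos
  have key : ∑ g : X × Y → Bool, ∑ x : X, ∑ x' : X, ∑ y : Y, ∑ y' : Y,
      sgn (g (x, y)) * sgn (g (x, y')) * sgn (g (x', y)) * sgn (g (x', y'))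
      ≤ (Fintype.card (X × Y → Bool) : ℝ) *
        (Fintype.card X * (Fintype.card Y : ℝ) ^ 2 + (Fintype.card X : ℝ) ^ 2 * Fintype.card Y) := by
    calc _ = ∑ x : X, ∑ x' : X, ∑ y : Y, ∑ y' : Y, ∑ g : X × Y → Bool,
          sgn (g (x, y)) * sgn (g (x, y')) * sgn (g (x', y)) * sgn (g (x', y')) := by
          rw [sum_comm]
          refine sum_congr rfl fun x _ => ?_
          rw [sum_comm]
          refine sum_congr rfl fun x' _ => ?_
          rw [sum_comm]
          exact sum_congr rfl fun y _ => sum_comm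
      _ ≤ ∑ x : X, ∑ x' : X, ∑ y : Y, ∑ y' : Y, (Fintype.card (X × Y → Bool) : ℝ) *
          ((if x = x' then 1 else 0) + (if y = y' then 1 else 0)) :=
          sum_le_sum fun x _ => sum_le_sum fun x' _ => sum_le_sum fun y _ =>
            sum_le_sum fun y' _ => sum_term_le x x' y y'
      _ = _ := by
          simp only [← mul_sum, sum_add_distrib, sum_const, card_univ, nsmul_eq_mul, sum_ite_eq,
            mem_univ, if_true]
          ring
  unfold R2
  rw [← mul_sum, ← sum_div, ← mul_div_assoc, div_le_iff₀ (by positivity)]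
  calc _ ≤ ((Fintype.card X : ℝ) * Fintype.card Y) * _ :=
        mul_le_mul_of_nonneg_left key (by positivity)
    _ = _ := by ring

/-- Largeness of Nisan's natural property with density `1/2`: for all sufficiently
large `n`, a uniformly random function `f : {0,1}^{⌈n/2⌉} × {0,1}^{⌊n/2⌋} → {-1,1}`
satisfies `2^n · R₂(f) ≤ 2^{2n/3}` with probability at least `1/2`. -/
theorem stmt_8 :
    ∃ n₀ : ℕ, ∀ n : ℕ, n₀ ≤ n →
      (1 : ℝ) / 2 ≤
        ((Finset.univ.filter fun g : (Fin ((n + 1) / 2) → Bool) × (Fin (n / 2) → Bool) → Bool =>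
            (2 : ℝ) ^ n * R2 (fun p => sgn (g p)) ≤ (2 : ℝ) ^ ((2 * (n : ℝ)) / 3)).card : ℝ) /
          (Fintype.card (((Fin ((n + 1) / 2) → Bool) × (Fin (n / 2) → Bool)) → Bool) : ℝ) := by
  -- From `n = 15` on, `2 + (n + 1) / 2 ≤ 2 * n / 3`.
  refine ⟨15, fun n hn => ?_⟩
  set X := Fin ((n + 1) / 2) → Bool
  set Y := Fin (n / 2) → Bool
  set T : ℝ := (2 : ℝ) ^ ((2 * (n : ℝ)) / 3) with hT
  have hTpos : 0 < T := by positivity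
  have hX : (Fintype.card X : ℝ) = 2 ^ ((n + 1) / 2) := by simp [X]
  have hY : (Fintype.card Y : ℝ) = 2 ^ (n / 2) := by simp [Y]
  have hXY : (Fintype.card X : ℝ) * Fintype.card Y = 2 ^ n := by
    rw [hX, hY, ← pow_add]
    congr 1
    omega
  have hsmall : 2 * ((Fintype.card X : ℝ) + Fintype.card Y) ≤ T := by
    have h1 : (2 : ℝ) ^ (n / 2) ≤ 2 ^ ((n + 1) / 2) :=
      pow_le_pow_right₀ (by norm_num) (by omega)
    have h2 : (2 : ℝ) ^ ((n + 1) / 2 + 2) ≤ T := by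
      rw [hT, ← Real.rpow_natCast]
      apply Real.rpow_le_rpow_of_exponent_le (by norm_num)
      have h3 : 3 * ((n + 1) / 2 + 2) ≤ 2 * n := by omega
      have h4 : (3 : ℝ) * (((n + 1) / 2 + 2 : ℕ) : ℝ) ≤ 2 * (n : ℝ) := by exact_mod_cast h3
      linarith
    rw [pow_add] at h2
    rw [hX, hY]
    linarith
  have hmean := sum_R2_le (X := X) (Y := Y)
  rw [hXY] at hmean
  set C : ℝ := (Fintype.card (X × Y → Bool) : ℝ) with hC
  have hCpos : 0 < C := by
    rw [hC]
    exact_mod_cast Fintype.card_pos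
  set P : (X × Y → Bool) → Prop := fun g => (2 : ℝ) ^ n * R2 (fun p => sgn (g p)) ≤ T with hP
  have hsplit : ((univ.filter P).card : ℝ) + ((univ.filter fun g => ¬ P g).card : ℝ) = C := by
    rw [hC]
    exact_mod_cast card_filter_add_card_filter_not (s := univ) P
  have hmarkov : ((univ.filter fun g => ¬ P g).card : ℝ) * T
      ≤ ∑ g : X × Y → Bool, (2 : ℝ) ^ n * R2 (fun p => sgn (g p)) := by
    rw [← nsmul_eq_mul]
    refine (card_nsmul_le_sum _ _ _ fun g hg => ?_).trans
      (sum_le_sum_of_subset_of_nonneg (filter_subset (fun g => ¬ P g) _) fun g _ _ =>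
        mul_nonneg (by positivity) (R2_nonneg _))
    exact (not_le.mp (mem_filter.mp hg).2).le
  have hbad : ((univ.filter fun g => ¬ P g).card : ℝ) ≤ C / 2 := by
    refine le_of_mul_le_mul_right ?_ hTpos
    nlinarith [mul_le_mul_of_nonneg_left hsmall hCpos.le]
  rw [le_div_iff₀ hCpos]
  change 1 / 2 * C ≤ ((univ.filter P).card : ℝ)
  linarith
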